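/- For the Souza–Marzari–Vanderbilt functional S_t = ∫_{1BZ} d²k Tr[g_{t,k}], the functional derivative satisfies δS_t/δ[g_{t,k}]_{ij} = δ_{ij}, and hence the general monotonic flow specializes to ∂_t P = α(P ∇²_k P Q̄ + Q̄ ∇²_k P P); along this flow the integrated trace of the quantum metric ∫_{1BZ} Tr[g_{t,k}] d²k is non-increasing in t. -/

import Mathlib

noncomputable section

/-- The finite-dimensional complex Hilbert space `ℂ^d`. -/
abbrev Hsp (d : ℕ) := EuclideanSpace ℂ (Fin d)

/-- Trace of a continuous linear endomorphism. -/
noncomputable def trC {d : ℕ} (T : Hsp d →L[ℂ] Hsp d) : ℂ :=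
  LinearMap.trace ℂ (Hsp d) (T : Hsp d →ₗ[ℂ] Hsp d)

/-- The partial derivative `∂_{k_i} P` of an operator-valued family on `ℝ²`. -/
noncomputable def pd {d : ℕ} (P : (Fin 2 → ℝ) → (Hsp d →L[ℂ] Hsp d))
    (i : Fin 2) (k : Fin 2 → ℝ) : Hsp d →L[ℂ] Hsp d :=
  fderiv ℝ P k (Pi.single i 1)

/-- The momentum-space Laplacian `∇²_k P = ∂²_{k_x} P + ∂²_{k_y} P`. -/
noncomputable def lap {d : ℕ} (P : (Fin 2 → ℝ) → (Hsp d →L[ℂ] Hsp d))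
    (k : Fin 2 → ℝ) : Hsp d →L[ℂ] Hsp d :=
  ∑ i : Fin 2, fderiv ℝ (fun k' => pd P i k') k (Pi.single i 1)

/-- The Brillouin zone (unit torus fundamental domain). -/
def BZ : Set (Fin 2 → ℝ) := Set.Icc 0 1

/-!
For quasi-periodic `P` the boundary terms cancel in Green's identity, because the conjugations
preserve the form `(S, T) ↦ Re Tr (S T)`. Hence the energy `½ ∑ i, ∫ Tr (∂_i P ∂_i P)` has time
derivative `-∫ Tr (∂_t P ∇² P)`. Along the flow the integrand is `α` times the sum of
`Tr (P ∇²P Q ∇²P)` and `Tr (Q ∇²P P ∇²P)`, each the trace of a product of two positive operators,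
since `∇²P` is self-adjoint.
-/

open MeasureTheory Set

section Calculus

variable {n : ℕ} {F G H : Type*}
  [NormedAddCommGroup F] [NormedSpace ℝ F] [NormedAddCommGroup G] [NormedSpace ℝ G]
  [NormedAddCommGroup H] [NormedSpace ℝ H]

/-- The partial derivative `∂_i f` of a function on `ℝⁿ`; `pd` is the case of operator values on
`ℝ²`. -/
def partialDeriv (f : (Fin n → ℝ) → F) (i : Fin n) (k : Fin n → ℝ) : F :=
  fderiv ℝ f k (Pi.single i 1)

/-- The Laplacian `∑ i, ∂_i² f` of a function on `ℝⁿ`. Mathlib's `InnerProductSpace.laplacian` does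
not apply, since `Fin n → ℝ` carries the sup norm. -/
def coordLaplacian (f : (Fin n → ℝ) → F) (k : Fin n → ℝ) : F :=
  ∑ i, partialDeriv (partialDeriv f i) i k

/-- Equivariance of `f` under the lattice `ℤⁿ`: translation by the `i`-th lattice vector acts on
the values of `f` through `Φ i`. -/
def IsQuasiPeriodic (Φ : Fin n → F →L[ℝ] F) (f : (Fin n → ℝ) → F) : Prop :=
  ∀ k i, f (k + Pi.single i 1) = Φ i (f k)

/-- The Dirichlet energy density `½ ∑ i, B (∂_i f, ∂_i f)` of `f` with respect to a bilinear form
`B` on its values. -/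
def dirichletDensity (B : F →L[ℝ] F →L[ℝ] ℝ) (f : (Fin n → ℝ) → F) (k : Fin n → ℝ) : ℝ :=
  ∑ i, 1 / 2 * B (partialDeriv f i k) (partialDeriv f i k)

theorem contDiff_partialDeriv {m : WithTop ℕ∞} {f : (Fin n → ℝ) → F} (hf : ContDiff ℝ (m + 1) f)
    (i : Fin n) : ContDiff ℝ m (partialDeriv f i) :=
  (hf.fderiv_right le_rfl).clm_apply contDiff_const

theorem continuous_coordLaplacian {f : (Fin n → ℝ) → F} (hf : ContDiff ℝ 2 f) :
    Continuous (coordLaplacian f) :=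
  continuous_finsetSum _ fun i _ =>
    (contDiff_partialDeriv (m := 0) (contDiff_partialDeriv (m := 1) hf i) i).continuous

theorem partialDeriv_clm_comp (L : F →L[ℝ] G) {f : (Fin n → ℝ) → F} {k : Fin n → ℝ}
    (hf : DifferentiableAt ℝ f k) (i : Fin n) :
    partialDeriv (fun x => L (f x)) i k = L (partialDeriv f i k) :=
  DFunLike.congr_fun (L.hasFDerivAt.comp k hf.hasFDerivAt).fderiv (Pi.single i 1)

theorem partialDeriv_bilin (B : F →L[ℝ] G →L[ℝ] H) {f : (Fin n → ℝ) → F} {g : (Fin n → ℝ) → G}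
    {k : Fin n → ℝ} (hf : DifferentiableAt ℝ f k) (hg : DifferentiableAt ℝ g k) (i : Fin n) :
    partialDeriv (fun x => B (f x) (g x)) i k =
      B (partialDeriv f i k) (g k) + B (f k) (partialDeriv g i k) := by
  rw [partialDeriv, B.fderiv_of_bilinear hf hg, add_comm]
  rfl

theorem IsQuasiPeriodic.partialDeriv {Φ : Fin n → F →L[ℝ] F} {f : (Fin n → ℝ) → F}
    (h : IsQuasiPeriodic Φ f) (hf : Differentiable ℝ f) (i : Fin n) :
    IsQuasiPeriodic Φ (partialDeriv f i) := by
  intro k j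
  rw [← partialDeriv_clm_comp _ (hf k), _root_.partialDeriv, ← fderiv_comp_add_right]
  simp only [h _ j, _root_.partialDeriv]

theorem isSelfAdjoint_partialDeriv [StarAddMonoid F] [StarModule ℝ F] [ContinuousStar F]
    {f : (Fin n → ℝ) → F} (hf : ∀ k, IsSelfAdjoint (f k)) (i : Fin n) (k : Fin n → ℝ) :
    IsSelfAdjoint (partialDeriv f i k) := by
  have h := DFunLike.congr_fun (fderiv_star (𝕜 := ℝ) (f := f) (x := k)) (Pi.single i 1)
  simp only [(hf _).star_eq] at h
  exact h.symm

theorem isSelfAdjoint_coordLaplacian [StarAddMonoid F] [StarModule ℝ F] [ContinuousStar F]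
    {f : (Fin n → ℝ) → F} (hf : ∀ k, IsSelfAdjoint (f k)) (k : Fin n → ℝ) :
    IsSelfAdjoint (coordLaplacian f k) :=
  isSelfAdjoint_sum _ fun i _ =>
    isSelfAdjoint_partialDeriv (fun x => isSelfAdjoint_partialDeriv hf i x) i k

end Calculus

section Green

variable {n : ℕ} {F : Type*} [NormedAddCommGroup F] [NormedSpace ℝ F]

theorem integral_divergence_eq_zero_of_periodic {W : Fin n → (Fin n → ℝ) → F}
    (hW : ∀ i, ContDiff ℝ 1 (W i)) (hper : ∀ i k, W i (k + Pi.single i 1) = W i k) :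
    ∫ k in Icc 0 1, ∑ i, partialDeriv (W i) i k = 0 := by
  obtain _ | n := n
  · simp
  have opposite_faces (i : Fin (n + 1)) (x : Fin n → ℝ) :
      (i.insertNth 1 x : Fin (n + 1) → ℝ) = i.insertNth 0 x + Pi.single i 1 := by
    ext j
    refine Fin.succAboveCases i ?_ (fun j => ?_) j <;> simp
  refine (integral_divergence_of_hasFDerivAt_off_countable' 0 1 zero_le_one W
    (fun i => fderiv ℝ (W i)) ∅ countable_empty (fun i => (hW i).continuous.continuousOn)
    (fun x _ i => ((hW i).differentiable one_ne_zero x).hasFDerivAt)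
    (continuous_finsetSum _ fun i _ =>
      (contDiff_partialDeriv (m := 0) (hW i) i).continuous).integrableOn_Icc).trans ?_
  refine Finset.sum_eq_zero fun i _ => sub_eq_zero.2 ?_
  simp only [Pi.zero_apply, Pi.one_apply, opposite_faces, hper]

theorem integral_bilin_coordLaplacian_eq_neg (B : F →L[ℝ] F →L[ℝ] ℝ) {Φ : Fin n → F →L[ℝ] F}
    (hΦ : ∀ i u v, B (Φ i u) (Φ i v) = B u v) {f g : (Fin n → ℝ) → F}
    (hf : ContDiff ℝ 2 f) (hg : ContDiff ℝ 1 g)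
    (hfper : IsQuasiPeriodic Φ f) (hgper : IsQuasiPeriodic Φ g) :
    ∫ k in Icc 0 1, B (g k) (coordLaplacian f k) =
      -∫ k in Icc 0 1, ∑ i, B (partialDeriv g i k) (partialDeriv f i k) := by
  have hdf (i : Fin n) : ContDiff ℝ 1 (partialDeriv f i) := contDiff_partialDeriv (m := 1) hf i
  have hdg (i : Fin n) : ContDiff ℝ 0 (partialDeriv g i) := contDiff_partialDeriv (m := 0) hg i
  have divergence_zero := integral_divergence_eq_zero_of_periodic
    (W := fun i k => B (g k) (partialDeriv f i k))
    (fun i => B.isBoundedBilinearMap.contDiff.comp (hg.prodMk (hdf i)))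
    (fun i k => by rw [hgper, hfper.partialDeriv (hf.differentiable two_ne_zero), hΦ])
  have leibniz (k : Fin n → ℝ) :
      ∑ i, partialDeriv (fun k => B (g k) (partialDeriv f i k)) i k =
        ∑ i, B (partialDeriv g i k) (partialDeriv f i k) + B (g k) (coordLaplacian f k) := by
    simp only [coordLaplacian, map_sum, ← Finset.sum_add_distrib]
    exact Finset.sum_congr rfl fun i _ => partialDeriv_bilin B
      (hg.differentiable one_ne_zero k) ((hdf i).differentiable one_ne_zero k) i
  have gradient_continuous :
      Continuous fun k => ∑ i, B (partialDeriv g i k) (partialDeriv f i k) :=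
    continuous_finsetSum _ fun i _ =>
      (B.continuous.comp (hdg i).continuous).clm_apply (hdf i).continuous
  have laplacian_continuous : Continuous fun k => B (g k) (coordLaplacian f k) :=
    (B.continuous.comp hg.continuous).clm_apply (continuous_coordLaplacian hf)
  simp only [leibniz] at divergence_zero
  rw [integral_add gradient_continuous.integrableOn_Icc
    laplacian_continuous.integrableOn_Icc] at divergence_zero
  linarith

end Green

section Evolution

theorem hasDerivAt_setIntegral_of_continuous {X F : Type*} [TopologicalSpace X] [T2Space X]
    [MeasurableSpace X] [OpensMeasurableSpace X] [NormedAddCommGroup F] [NormedSpace ℝ F]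
    {μ : Measure X} [IsFiniteMeasureOnCompacts μ] {K : Set X} (hK : IsCompact K)
    {f f' : ℝ → X → F} (hf : ∀ t, Continuous (f t)) (hf' : Continuous (Function.uncurry f'))
    (hderiv : ∀ t k, HasDerivAt (fun s => f s k) (f' t k) t) (t : ℝ) :
    HasDerivAt (fun s => ∫ k in K, f s k ∂μ) (∫ k in K, f' t k ∂μ) t := by
  obtain ⟨C, hC⟩ := ((isCompact_closedBall t 1).prod hK).exists_bound_of_continuousOn
    hf'.continuousOn
  have measurable {g : X → F} (hg : Continuous g) : AEStronglyMeasurable g (μ.restrict K) :=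
    hg.continuousOn.aestronglyMeasurable_of_isCompact hK hK.measurableSet
  refine (hasDerivAt_integral_of_dominated_loc_of_deriv_le (F := f) (F' := f')
    (bound := fun _ => C) (Metric.closedBall_mem_nhds t one_pos)
    (.of_forall fun s => measurable (hf s))
    ((hf t).continuousOn.integrableOn_compact hK) (measurable (by fun_prop)) ?_
    (integrableOn_const hK.measure_lt_top.ne) (.of_forall fun k s _ => hderiv s k)).2
  filter_upwards [ae_restrict_mem hK.measurableSet] with k hk s hs using hC (s, k) ⟨hs, hk⟩

variable {n : ℕ} {F : Type*} [NormedAddCommGroup F] [NormedSpace ℝ F]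
  {f : ℝ → (Fin n → ℝ) → F}

theorem contDiff_uncurry_partialDeriv {m : WithTop ℕ∞}
    (hf : ContDiff ℝ (m + 1) (Function.uncurry f)) (i : Fin n) :
    ContDiff ℝ m (Function.uncurry fun t => partialDeriv (f t) i) :=
  ContDiff.fderiv_apply (f := fun x : ℝ × (Fin n → ℝ) => f x.1)
    (hf.comp (f := fun y : (ℝ × (Fin n → ℝ)) × (Fin n → ℝ) => (y.1.1, y.2)) (by fun_prop))
    contDiff_snd contDiff_const le_rfl

theorem contDiff_uncurry_deriv {m : WithTop ℕ∞} (hf : ContDiff ℝ (m + 1) (Function.uncurry f)) :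
    ContDiff ℝ m (Function.uncurry fun t k => deriv (fun s => f s k) t) :=
  ContDiff.fderiv_apply (f := fun (x : ℝ × (Fin n → ℝ)) s => f s x.2)
    (hf.comp (f := fun y : (ℝ × (Fin n → ℝ)) × ℝ => (y.2, y.1.2)) (by fun_prop))
    contDiff_fst contDiff_const le_rfl

theorem deriv_eq_fderiv_uncurry (hf : Differentiable ℝ (Function.uncurry f)) (t : ℝ)
    (k : Fin n → ℝ) : deriv (fun s => f s k) t = fderiv ℝ (Function.uncurry f) (t, k) (1, 0) :=
  ((hf (t, k)).hasFDerivAt.comp_hasDerivAt (f := fun s => (s, k)) t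
    ((hasDerivAt_id t).prodMk (hasDerivAt_const t k))).deriv

theorem partialDeriv_eq_fderiv_uncurry (hf : Differentiable ℝ (Function.uncurry f)) (i : Fin n)
    (t : ℝ) (k : Fin n → ℝ) :
    partialDeriv (f t) i k = fderiv ℝ (Function.uncurry f) (t, k) (0, Pi.single i 1) := by
  have h : HasFDerivAt (f t) _ k :=
    (hf (t, k)).hasFDerivAt.comp k (hasFDerivAt_prodMk_right (𝕜 := ℝ) t k)
  rw [partialDeriv, h.fderiv]
  rfl

theorem deriv_partialDeriv_comm (hf : ContDiff ℝ 2 (Function.uncurry f)) (i : Fin n) (t : ℝ)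
    (k : Fin n → ℝ) :
    deriv (fun s => partialDeriv (f s) i k) t =
      partialDeriv (fun x => deriv (fun s => f s x) t) i k := by
  have hf₁ := hf.differentiable two_ne_zero
  have hf₂ : Differentiable ℝ (fderiv ℝ (Function.uncurry f)) :=
    (hf.fderiv_right (m := 1) le_rfl).differentiable one_ne_zero
  have second_deriv (v w : ℝ × (Fin n → ℝ)) :
      fderiv ℝ (fun x => fderiv ℝ (Function.uncurry f) x w) (t, k) v =
        fderiv ℝ (fderiv ℝ (Function.uncurry f)) (t, k) v w := by
    rw [fderiv_clm_apply (hf₂ _) (differentiableAt_const w)]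
    simp
  have hd (w : ℝ × (Fin n → ℝ)) :
      Differentiable ℝ fun x => fderiv ℝ (Function.uncurry f) x w :=
    hf₂.clm_apply (differentiable_const w)
  simp only [partialDeriv_eq_fderiv_uncurry hf₁, deriv_eq_fderiv_uncurry hf₁]
  calc deriv (fun s => fderiv ℝ (Function.uncurry f) (s, k) (0, Pi.single i 1)) t
      = fderiv ℝ (fderiv ℝ (Function.uncurry f)) (t, k) (1, 0) (0, Pi.single i 1) := by
        rw [← second_deriv]
        exact deriv_eq_fderiv_uncurry
          (f := fun s x => fderiv ℝ (Function.uncurry f) (s, x) (0, Pi.single i 1)) (hd _) t k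
    _ = fderiv ℝ (fderiv ℝ (Function.uncurry f)) (t, k) (0, Pi.single i 1) (1, 0) :=
        (hf.contDiffAt.isSymmSndFDerivAt (by simp)) _ _
    _ = partialDeriv (fun x => fderiv ℝ (Function.uncurry f) (t, x) (1, 0)) i k := by
        rw [← second_deriv]
        exact (partialDeriv_eq_fderiv_uncurry
          (f := fun s x => fderiv ℝ (Function.uncurry f) (s, x) (1, 0)) (hd _) i t k).symm

theorem IsQuasiPeriodic.deriv {Φ : Fin n → F →L[ℝ] F} (h : ∀ t, IsQuasiPeriodic Φ (f t))
    (hf : ∀ k, Differentiable ℝ fun t => f t k) (t : ℝ) :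
    IsQuasiPeriodic Φ fun k => deriv (fun s => f s k) t := by
  intro k i
  simp only [h _ k i]
  exact ((Φ i).hasFDerivAt.comp_hasDerivAt t (hf k t).hasDerivAt).deriv

theorem hasDerivAt_dirichletDensity {B : F →L[ℝ] F →L[ℝ] ℝ} (hB : ∀ u v, B u v = B v u)
    (hf : ContDiff ℝ 2 (Function.uncurry f)) (t : ℝ) (k : Fin n → ℝ) :
    HasDerivAt (fun s => dirichletDensity B (f s) k)
      (∑ i, B (partialDeriv (fun x => deriv (fun s => f s x) t) i k) (partialDeriv (f t) i k))
      t := by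
  refine HasDerivAt.fun_sum fun i _ => ?_
  have h : HasDerivAt (fun s => partialDeriv (f s) i k)
      (partialDeriv (fun x => deriv (fun s => f s x) t) i k) t := by
    rw [← deriv_partialDeriv_comm hf]
    have := (contDiff_uncurry_partialDeriv (m := 1) hf i).differentiable one_ne_zero
    exact (this.comp (f := fun s => (s, k)) (by fun_prop) t).hasDerivAt
  refine ((B.hasDerivAt_of_bilinear (fun _ => h) fun _ => h).const_mul (1 / 2)).congr_deriv ?_
  rw [hB (partialDeriv (f t) i k)]
  ring

theorem hasDerivAt_integral_dirichletDensity {B : F →L[ℝ] F →L[ℝ] ℝ} (hB : ∀ u v, B u v = B v u)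
    {Φ : Fin n → F →L[ℝ] F} (hΦ : ∀ i u v, B (Φ i u) (Φ i v) = B u v)
    (hf : ContDiff ℝ 2 (Function.uncurry f)) (hper : ∀ t, IsQuasiPeriodic Φ (f t)) (t : ℝ) :
    HasDerivAt (fun s => ∫ k in Icc 0 1, dirichletDensity B (f s) k)
      (-∫ k in Icc 0 1, B (deriv (fun s => f s k) t) (coordLaplacian (f t) k)) t := by
  have hslice (t : ℝ) : ContDiff ℝ 2 (f t) := hf.comp (contDiff_prodMk_right t)
  have hdt : ContDiff ℝ 1 (Function.uncurry fun t k => deriv (fun s => f s k) t) :=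
    contDiff_uncurry_deriv (m := 1) hf
  have hdf (i : Fin n) : Continuous (Function.uncurry fun t => partialDeriv (f t) i) :=
    (contDiff_uncurry_partialDeriv (m := 1) hf i).continuous
  have hdtf (i : Fin n) : Continuous (Function.uncurry fun t =>
      partialDeriv (fun x => deriv (fun s => f s x) t) i) :=
    (contDiff_uncurry_partialDeriv (m := 0) hdt i).continuous
  have htime (k : Fin n → ℝ) : Differentiable ℝ fun t => f t k :=
    (hf.differentiable two_ne_zero).comp (f := fun t => (t, k)) (by fun_prop)
  rw [integral_bilin_coordLaplacian_eq_neg (g := fun k => deriv (fun s => f s k) t) B hΦ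
    (hslice t) (hdt.comp (contDiff_prodMk_right t)) (hper t)
    (IsQuasiPeriodic.deriv hper htime t), neg_neg]
  refine hasDerivAt_setIntegral_of_continuous isCompact_Icc (fun s => ?_) ?_
    (fun s k => hasDerivAt_dirichletDensity hB hf s k) t
  · have hdfs (i : Fin n) : Continuous (partialDeriv (f s) i) :=
      (hdf i).comp (.prodMk_right s)
    exact continuous_finsetSum _ fun i _ =>
      continuous_const.mul ((B.continuous.comp (hdfs i)).clm_apply (hdfs i))
  · exact continuous_finsetSum _ fun i _ => (B.continuous.comp (hdtf i)).clm_apply (hdf i)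

theorem antitone_integral_dirichletDensity {B : F →L[ℝ] F →L[ℝ] ℝ} (hB : ∀ u v, B u v = B v u)
    {Φ : Fin n → F →L[ℝ] F} (hΦ : ∀ i u v, B (Φ i u) (Φ i v) = B u v)
    (hf : ContDiff ℝ 2 (Function.uncurry f)) (hper : ∀ t, IsQuasiPeriodic Φ (f t))
    (hdescent : ∀ t k, 0 ≤ B (deriv (fun s => f s k) t) (coordLaplacian (f t) k)) :
    Antitone fun t => ∫ k in Icc 0 1, dirichletDensity B (f t) k :=
  antitone_of_hasDerivAt_nonpos (hasDerivAt_integral_dirichletDensity hB hΦ hf hper)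
    fun t => neg_nonpos.2 (integral_nonneg (hdescent t))

end Evolution

section TraceForm

variable {E : Type*} [NormedAddCommGroup E] [InnerProductSpace ℂ E] [FiniteDimensional ℂ E]

variable (E) in
/-- The real bilinear form `(S, T) ↦ Re Tr (S T)` on operators; on self-adjoint operators it is the
Hilbert–Schmidt inner product. -/
def reTraceForm : (E →L[ℂ] E) →L[ℝ] (E →L[ℂ] E) →L[ℝ] ℝ :=
  ContinuousLinearMap.compL ℝ _ _ _ (Complex.reCLM ∘L
    ((LinearMap.trace ℂ E ∘ₗ ContinuousLinearMap.coeLM ℂ).toContinuousLinearMap.restrictScalars ℝ))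
    ∘L ContinuousLinearMap.mul ℝ (E →L[ℂ] E)

theorem reTraceForm_apply (S T : E →L[ℂ] E) :
    reTraceForm E S T = (LinearMap.trace ℂ E (S ∘L T : E →L[ℂ] E)).re := rfl

theorem reTraceForm_comm (S T : E →L[ℂ] E) : reTraceForm E S T = reTraceForm E T S :=
  congrArg Complex.re (LinearMap.trace_mul_comm ℂ (S : E →ₗ[ℂ] E) T)

theorem reTraceForm_conj {V W : E →L[ℂ] E} (hWV : W ∘L V = 1) (S T : E →L[ℂ] E) :
    reTraceForm E (V ∘L S ∘L W) (V ∘L T ∘L W) = reTraceForm E S T := by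
  calc reTraceForm E (V ∘L S ∘L W) (V ∘L T ∘L W)
      = reTraceForm E V (S ∘L (W ∘L V) ∘L T ∘L W) := rfl
    _ = reTraceForm E (S ∘L T ∘L W) V := by
        rw [hWV, reTraceForm_comm]
        rfl
    _ = reTraceForm E S (T ∘L (W ∘L V)) := rfl
    _ = reTraceForm E S T := by
        rw [hWV]
        rfl

theorem reTraceForm_nonneg {S T : E →L[ℂ] E} (hS : S.IsPositive) (hT : T.IsPositive) :
    0 ≤ reTraceForm E S T := by
  have := FiniteDimensional.complete ℂ E
  obtain ⟨R, rfl⟩ := CStarAlgebra.nonneg_iff_eq_star_mul_self.1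
    ((ContinuousLinearMap.nonneg_iff_isPositive S).2 hS)
  have h :=
    ((ContinuousLinearMap.isPositive_toLinearMap_iff _).2 (hT.conj_adjoint R)).trace_nonneg
  calc 0 ≤ reTraceForm E R (T ∘L star R) := (Complex.nonneg_iff.1 h).1
    _ = reTraceForm E (star R * R) T := by
        rw [reTraceForm_comm, reTraceForm_comm (star R * R)]
        rfl

theorem reTraceForm_comp_add_comp_nonneg [CompleteSpace E] {S T L : E →L[ℂ] E} (hS : S.IsPositive)
    (hT : T.IsPositive) (hL : IsSelfAdjoint L) :
    0 ≤ reTraceForm E (S ∘L L ∘L T + T ∘L L ∘L S) L := by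
  have conj_positive {R : E →L[ℂ] E} (hR : R.IsPositive) : (L ∘L R ∘L L).IsPositive := by
    simpa only [hL.adjoint_eq] using hR.conj_adjoint L
  calc 0 ≤ reTraceForm E S (L ∘L T ∘L L) + reTraceForm E T (L ∘L S ∘L L) :=
        add_nonneg (reTraceForm_nonneg hS (conj_positive hT))
          (reTraceForm_nonneg hT (conj_positive hS))
    _ = reTraceForm E (S ∘L L ∘L T) L + reTraceForm E (T ∘L L ∘L S) L := rfl
    _ = reTraceForm E (S ∘L L ∘L T + T ∘L L ∘L S) L := by rw [map_add, add_apply]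

end TraceForm

theorem smv_flow_trace_nonincreasing_general {n : ℕ} {E : Type*} [NormedAddCommGroup E]
    [InnerProductSpace ℂ E] [FiniteDimensional ℂ E] {α : ℝ} (hα : 0 ≤ α)
    {P Q : ℝ → (Fin n → ℝ) → (E →L[ℂ] E)} {V W : Fin n → (E →L[ℂ] E)}
    (hP : ContDiff ℝ 2 (Function.uncurry P)) (hPpos : ∀ t k, (P t k).IsPositive)
    (hQpos : ∀ t k, (Q t k).IsPositive) (hWV : ∀ i, W i ∘L V i = 1)
    (hPper : ∀ t k i, P t (k + Pi.single i 1) = V i ∘L P t k ∘L W i)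
    (hflow : ∀ t k, deriv (fun s => P s k) t =
      α • (P t k ∘L coordLaplacian (P t) k ∘L Q t k +
        Q t k ∘L coordLaplacian (P t) k ∘L P t k)) :
    Antitone fun t => ∫ k in Icc 0 1, ∑ i, ((1 / 2 : ℂ) * LinearMap.trace ℂ E
      (partialDeriv (P t) i k ∘L partialDeriv (P t) i k : E →L[ℂ] E)).re := by
  have := FiniteDimensional.complete ℂ E
  let Φ (i : Fin n) : (E →L[ℂ] E) →L[ℝ] (E →L[ℂ] E) :=
    ContinuousLinearMap.mul ℝ _ (V i) ∘L (ContinuousLinearMap.mul ℝ (E →L[ℂ] E)).flip (W i)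
  have energy_eq (t : ℝ) (k : Fin n → ℝ) : dirichletDensity (reTraceForm E) (P t) k =
      ∑ i, ((1 / 2 : ℂ) * LinearMap.trace ℂ E
        (partialDeriv (P t) i k ∘L partialDeriv (P t) i k : E →L[ℂ] E)).re := by
    simp [dirichletDensity, reTraceForm_apply]
  simp only [← energy_eq]
  refine antitone_integral_dirichletDensity reTraceForm_comm (Φ := Φ)
    (fun i => reTraceForm_conj (hWV i)) hP hPper fun t k => ?_
  rw [hflow, map_smul]
  exact mul_nonneg hα (reTraceForm_comp_add_comp_nonneg (hPpos t k) (hQpos t k)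
    (isSelfAdjoint_coordLaplacian (fun x => (hPpos t x).isSelfAdjoint) k))

/-- Along the Souza–Marzari–Vanderbilt flow `∂_t P = α(P ∇²_k P Q̄ + Q̄ ∇²_k P P)`
(the specialization of the general monotonic flow to `S_t = ∫ Tr[g_{t,k}]`, whose
functional derivative is `δ_ij`), the integrated trace of the quantum metric
`∫_{1BZ} Tr[g_{t,k}] d²k` is non-increasing in `t`. -/
theorem smv_flow_trace_nonincreasing (d : ℕ) (α : ℝ) (hα : 0 < α)
    (P Qb : ℝ → (Fin 2 → ℝ) → (Hsp d →L[ℂ] Hsp d))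
    (V : Fin 2 → (Hsp d →L[ℂ] Hsp d))
    (hPsmooth : ContDiff ℝ (⊤ : ℕ∞) (Function.uncurry P))
    (hQsmooth : ContDiff ℝ (⊤ : ℕ∞) (Function.uncurry Qb))
    (hPproj : ∀ t k, P t k ∘L P t k = P t k ∧
      ContinuousLinearMap.adjoint (P t k) = P t k)
    (hQproj : ∀ t k, Qb t k ∘L Qb t k = Qb t k ∧
      ContinuousLinearMap.adjoint (Qb t k) = Qb t k)
    (horth : ∀ t k, P t k ∘L Qb t k = 0 ∧ Qb t k ∘L P t k = 0)
    (hVunitary : ∀ i, V i ∘L ContinuousLinearMap.adjoint (V i) = 1 ∧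
      ContinuousLinearMap.adjoint (V i) ∘L V i = 1)
    (hPper : ∀ t k (i : Fin 2),
      P t (k + Pi.single i 1) = V i ∘L P t k ∘L ContinuousLinearMap.adjoint (V i))
    (hflow : ∀ t k, deriv (fun t' => P t' k) t =
      α • (P t k ∘L lap (P t) k ∘L Qb t k + Qb t k ∘L lap (P t) k ∘L P t k)) :
    Antitone fun t => ∫ k in BZ,
      ∑ i : Fin 2, ((1 / 2 : ℂ) * trC (pd (P t) i k ∘L pd (P t) i k)).re :=
  smv_flow_trace_nonincreasing_general (Q := Qb) hα.le
    (contDiff_infty.1 hPsmooth 2)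
    (fun t k => .of_isStarProjection ⟨(hPproj t k).1, (hPproj t k).2⟩)
    (fun t k => .of_isStarProjection ⟨(hQproj t k).1, (hQproj t k).2⟩)
    (fun i => (hVunitary i).2) hPper hflow

end
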